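/- Let φ ∈ BV([−π,π)), 0 < ν < 1, κ > π, a ∈ ℝ, and define the 2π-periodic function V(x) = φ(x)/(|x|^ν (log|κ/x|)^a) for −π ≤ x < π. Then the Fourier coefficients of V satisfy |V̂(0)| ≤ C and |V̂(k)| ≤ C |k|^{ν−1} (log|k|)^{−a} for |k| ≥ 2, with C independent of k. -/

import Mathlib

open MeasureTheory Real

/-- The `k`-th Fourier coefficient of a `2π`-periodic function. -/
noncomputable def fc (f : ℝ → ℂ) (k : ℤ) : ℂ :=
  (1 / (2 * π)) * ∫ x in (0 : ℝ)..(2 * π), Complex.exp (-Complex.I * k * x) * f x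


noncomputable def ek (k x : ℝ) : ℂ := Complex.exp (-Complex.I * k * x)

lemma ek_norm (k x : ℝ) : ‖ek k x‖ = 1 := by
  unfold ek
  rw [Complex.norm_exp]; simp

lemma ek_cont (k : ℝ) : Continuous (ek k) := by
  unfold ek; fun_prop

lemma ek_shift (k x : ℝ) (hk : k ≠ 0) : ek k (x + π / |k|) = - ek k x := by
  unfold ek
  have : -Complex.I * k * ((x + π / |k| : ℝ) : ℂ) = -Complex.I * k * x + (-(k/|k|) * π : ℝ) * Complex.I := by
    push_cast; ring
  rw [this, Complex.exp_add]
  rcases lt_or_gt_of_ne hk with h | h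
  · rw [abs_of_neg h]
    have : -(k / -k) * π = π := by field_simp
    rw [this, Complex.exp_pi_mul_I]; ring
  · rw [abs_of_pos h]
    have : -(k / k) * π = -π := by field_simp
    rw [this]; push_cast
    rw [neg_mul (π:ℂ), Complex.exp_neg, Complex.exp_pi_mul_I]; norm_num

lemma shift_bound (f v : ℝ → ℝ) (M W k a b : ℝ) (hk : k ≠ 0) (hab : a ≤ b)
    (hv : Monotone v) (hfv : ∀ x y, x ≤ y → |f y - f x| ≤ v y - v x)
    (hM : ∀ x, |f x| ≤ M) (hW : ∀ x y, v y - v x ≤ W) :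
    ‖∫ x in a..b, ek k x * (f x : ℂ)‖ ≤ (π / |k|) * (M + W) := by
  set h := π / |k| with hh
  have hpos : 0 < h := by positivity
  have hM0 : 0 ≤ M := (abs_nonneg _).trans (hM 0)
  have hW0 : 0 ≤ W := by simpa using hW 0 0
  have hfi : ∀ a b, IntervalIntegrable f volume a b := by
    intro a b
    have h1 : Monotone (fun x => f x + v x) := by
      intro x y hxy
      have := (abs_le.1 (hfv x y hxy)).1
      simp only; linarith
    have := (h1.intervalIntegrable (μ := volume) (a := a) (b := b)).sub (hv.intervalIntegrable (μ := volume) (a := a) (b := b))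
    simpa using this
  have hvi : ∀ a b, IntervalIntegrable v volume a b := fun a b => hv.intervalIntegrable
  have hei : ∀ a b, IntervalIntegrable (fun x => ek k x * (f x : ℂ)) volume a b := by
    intro a b
    have : IntervalIntegrable (fun x => (f x : ℂ)) volume a b := ⟨(hfi a b).1.ofReal, (hfi a b).2.ofReal⟩
    exact this.continuousOn_mul (ek_cont k).continuousOn
  have hsh : ∫ x in a+h..b+h, ek k x * (f x : ℂ) = - ∫ x in a..b, ek k x * (f (x+h) : ℂ) := by
    rw [← intervalIntegral.integral_comp_add_right (fun x => ek k x * (f x : ℂ)) h,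
      ← intervalIntegral.integral_neg]
    congr 1; ext x
    rw [hh, ek_shift k x hk]; ring
  have hfi' : IntervalIntegrable (fun x => f (x+h)) volume a b := by
    simpa using (hfi (a+h) (b+h)).comp_add_right h
  have hvi' : IntervalIntegrable (fun x => v (x+h)) volume a b := by
    simpa using (hvi (a+h) (b+h)).comp_add_right h
  have hei' : IntervalIntegrable (fun x => ek k x * (f (x+h) : ℂ)) volume a b := by
    have : IntervalIntegrable (fun x => (f (x+h) : ℂ)) volume a b := ⟨hfi'.1.ofReal, hfi'.2.ofReal⟩
    exact this.continuousOn_mul (ek_cont k).continuousOn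
  have hsmall : ∀ c, ‖∫ x in c..c+h, ek k x * (f x : ℂ)‖ ≤ M * h := by
    intro c
    have := intervalIntegral.norm_integral_le_of_norm_le_const (a := c) (b := c+h) (C := M)
      (f := fun x => ek k x * (f x : ℂ)) (by
        intro x _
        rw [norm_mul, ek_norm, one_mul, Complex.norm_real]; exact hM x)
    simpa [abs_of_pos hpos] using this
  have hid : 2 * ∫ x in a..b, ek k x * (f x : ℂ) =
      (∫ x in a..b, (ek k x * (f x : ℂ) - ek k x * (f (x+h) : ℂ)))
       + (∫ x in a..a+h, ek k x * (f x : ℂ)) - ∫ x in b..b+h, ek k x * (f x : ℂ) := by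
    rw [intervalIntegral.integral_sub (hei a b) hei', ← neg_eq_iff_eq_neg.2 hsh]
    have h1 := intervalIntegral.integral_add_adjacent_intervals (hei a b) (hei b (b+h))
    have h2 := intervalIntegral.integral_add_adjacent_intervals (hei a (a+h)) (hei (a+h) (b+h))
    linear_combination h1 - h2
  have hdiff : ‖∫ x in a..b, (ek k x * (f x : ℂ) - ek k x * (f (x+h) : ℂ))‖ ≤ W * h := by
    have h1 : ‖∫ x in a..b, (ek k x * (f x : ℂ) - ek k x * (f (x+h) : ℂ))‖ ≤ ∫ x in a..b, (v (x+h) - v x) := by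
      apply intervalIntegral.norm_integral_le_of_norm_le hab
      · refine Filter.Eventually.of_forall fun x _ => ?_
        rw [← mul_sub, norm_mul, ek_norm, one_mul, ← Complex.ofReal_sub, Complex.norm_real, Real.norm_eq_abs,
          abs_sub_comm]
        exact hfv _ _ (by linarith)
      · exact hvi'.sub (hvi a b)
    have h2 : ∫ x in a..b, (v (x+h) - v x) = ∫ x in (0:ℝ)..h, (v (b + x) - v (a + x)) := by
      rw [intervalIntegral.integral_sub hvi' (hvi a b), intervalIntegral.integral_comp_add_right v h,
        intervalIntegral.integral_sub, intervalIntegral.integral_comp_add_left, intervalIntegral.integral_comp_add_left]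
      · have h1 := intervalIntegral.integral_add_adjacent_intervals (hvi a b) (hvi b (b+h))
        have h2 := intervalIntegral.integral_add_adjacent_intervals (hvi a (a+h)) (hvi (a+h) (b+h))
        simp only [add_zero]; linarith
      · simpa using (hvi (b) (b+h)).comp_add_left b
      · simpa using (hvi (a) (a+h)).comp_add_left a
    rw [h2] at h1
    refine h1.trans ?_
    have := intervalIntegral.norm_integral_le_of_norm_le_const (a := 0) (b := h) (C := W)
      (f := fun x => v (b+x) - v (a+x)) (by
        intro x _
        rw [Real.norm_eq_abs, abs_of_nonneg (by have := hv (show a + x ≤ b + x by linarith); linarith)]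
        exact hW _ _)
    simp only [sub_zero, abs_of_pos hpos] at this
    exact (le_abs_self _).trans this
  have : ‖(2:ℂ) * ∫ x in a..b, ek k x * (f x : ℂ)‖ ≤ W * h + M * h + M * h := by
    rw [hid]
    refine (norm_sub_le _ _).trans (add_le_add ((norm_add_le _ _).trans (add_le_add hdiff (hsmall a))) (hsmall b))
  rw [norm_mul] at this
  simp only [Complex.norm_ofNat] at this
  nlinarith [mul_nonneg hW0 hpos.le]

lemma mul_bound (m g : ℝ → ℝ) (M k d : ℝ) (hk : k ≠ 0) (hd : 0 < d) (hdπ : d ≤ π)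
    (hm : MonotoneOn m (Set.Ioc 0 π)) (hg : AntitoneOn g (Set.Ioc 0 π))
    (hm0 : ∀ x ∈ Set.Ioc 0 π, 0 ≤ m x) (hmM : ∀ x ∈ Set.Ioc 0 π, m x ≤ M)
    (hg0 : ∀ x ∈ Set.Ioc 0 π, 0 ≤ g x) :
    ‖∫ x in d..π, ek k x * ((m x * g x : ℝ) : ℂ)‖ ≤ (π / |k|) * (3 * M * g d) := by
  let c : ℝ → ℝ := fun x => max d (min x π)
  have hc : ∀ x, c x ∈ Set.Ioc 0 π := fun x => ⟨lt_max_of_lt_left hd, max_le hdπ (min_le_right _ _)⟩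
  have hcd : ∀ x, d ≤ c x := fun x => le_max_left _ _
  have hcm : Monotone c := fun x y h => max_le_max le_rfl (min_le_min h le_rfl)
  have hdm : d ∈ Set.Ioc 0 π := ⟨hd, hdπ⟩
  have e : ∫ x in d..π, ek k x * ((m x * g x : ℝ) : ℂ) = ∫ x in d..π, ek k x * ((m (c x) * g (c x) : ℝ) : ℂ) := by
    apply intervalIntegral.integral_congr
    intro x hx
    rw [Set.uIcc_of_le hdπ] at hx
    have : c x = x := by simp [c, hx.1, hx.2]
    simp only [this]
  have hgd : ∀ x, g (c x) ≤ g d := fun x => hg hdm (hc x) (hcd x)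
  have hm0' := fun x => hm0 _ (hc x)
  have hmM' := fun x => hmM _ (hc x)
  have hg0' := fun x => hg0 _ (hc x)
  have hgd0 := hg0 d hdm
  have hM0 : 0 ≤ M := (hm0' 0).trans (hmM' 0)
  have hstep : ∀ x y, x ≤ y → m (c x) ≤ m (c y) ∧ g (c y) ≤ g (c x) := fun x y h =>
    ⟨hm (hc x) (hc y) (hcm h), hg (hc x) (hc y) (hcm h)⟩
  rw [e]
  refine (shift_bound _ (fun x => g d * m (c x) - M * g (c x)) (M * g d) (2 * M * g d) k d π hk hdπ ?_ ?_ ?_ ?_).trans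
    (le_of_eq (by ring))
  · intro x y h
    obtain ⟨h1, h2⟩ := hstep x y h
    simp only
    nlinarith
  · intro x y h
    obtain ⟨h1, h2⟩ := hstep x y h
    have e1 : m (c y) * g (c y) - m (c x) * g (c x) = (m (c y) - m (c x)) * g (c y) - m (c x) * (g (c x) - g (c y)) := by ring
    have i1 : (m (c y) - m (c x)) * g (c y) ≤ (m (c y) - m (c x)) * g d :=
      mul_le_mul_of_nonneg_left (hgd y) (by linarith)
    have i2 : m (c x) * (g (c x) - g (c y)) ≤ M * (g (c x) - g (c y)) :=
      mul_le_mul_of_nonneg_right (hmM' x) (by linarith)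
    have i3 : 0 ≤ (m (c y) - m (c x)) * g (c y) := mul_nonneg (by linarith) (hg0' y)
    have i4 : 0 ≤ m (c x) * (g (c x) - g (c y)) := mul_nonneg (hm0' x) (by linarith)
    rw [e1, abs_le]
    constructor <;> nlinarith
  · intro x
    rw [abs_of_nonneg (mul_nonneg (hm0' x) (hg0' x))]
    exact mul_le_mul (hmM' x) (hgd x) (hg0' x) hM0
  · intro x y
    nlinarith [mul_le_mul_of_nonneg_left (hmM' y) hgd0, mul_nonneg hgd0 (hm0' x),
      mul_le_mul_of_nonneg_left (hgd x) hM0, mul_nonneg hM0 (hg0' y)]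

noncomputable def gg (κ ν a x : ℝ) : ℝ := x ^ (-ν) * Real.log (κ / x) ^ (-a)

lemma log_pos_aux {κ x : ℝ} (hκ : π < κ) (hx : x ∈ Set.Ioc 0 π) : 0 < Real.log (κ / x) := by
  apply Real.log_pos
  rw [lt_div_iff₀ hx.1]; linarith [hx.2]

lemma base_mono {K ε : ℝ} (hK : π < K) (hε : 0 < ε) (h : 1 ≤ ε * Real.log (K / π)) :
    MonotoneOn (fun x => x ^ ε * Real.log (K / x)) (Set.Ioc 0 π) := by
  intro x hx y hy hxy
  have hx0 := hx.1
  have hy0 := hy.1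
  have hK0 : 0 < K := pi_pos.trans hK
  set t := Real.log (y / x) with ht
  have ht0 : 0 ≤ t := Real.log_nonneg (by rw [le_div_iff₀ hx0]; linarith)
  have hL : Real.log (K / x) = Real.log (K / y) + t := by
    rw [ht, Real.log_div hK0.ne' hx0.ne', Real.log_div hK0.ne' hy0.ne', Real.log_div hy0.ne' hx0.ne']; ring
  have hL1 : Real.log (K / π) ≤ Real.log (K / y) := by
    apply Real.log_le_log (by positivity)
    exact div_le_div_of_nonneg_left hK0.le hy0 hy.2
  have hLp := log_pos_aux hK hy
  have hy1 : y ^ ε = x ^ ε * Real.exp (ε * t) := by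
    have : y = x * (y / x) := by field_simp
    conv_lhs => rw [this]
    rw [Real.mul_rpow hx0.le (by positivity), Real.rpow_def_of_pos (by positivity : 0 < y / x), mul_comm (Real.log _)]
  simp only
  rw [hy1, hL, mul_assoc]
  apply mul_le_mul_of_nonneg_left _ (by positivity)
  have h2 : 1 + ε * t ≤ Real.exp (ε * t) := by linarith [Real.add_one_le_exp (ε * t)]
  have h3 : 1 ≤ ε * Real.log (K / y) := h.trans (mul_le_mul_of_nonneg_left hL1 hε.le)
  nlinarith [mul_le_mul_of_nonneg_right h2 hLp.le, mul_le_mul_of_nonneg_left h3 ht0]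

/-- `x^ε log(K/x)^b` is monotone for large `K`. -/
lemma pow_mono (κ : ℝ) (hκ : π < κ) {ε b : ℝ} (hε : 0 < ε) (hb : 0 < b) : ∃ K, κ ≤ K ∧
    MonotoneOn (fun x => x ^ ε * Real.log (K / x) ^ b) (Set.Ioc 0 π) := by
  refine ⟨max κ (π * Real.exp (b / ε)), le_max_left _ _, ?_⟩
  set K := max κ (π * Real.exp (b / ε)) with hKd
  have hK : π < K := hκ.trans_le (le_max_left _ _)
  have hbe : 0 < ε / b := by positivity
  have h1 : 1 ≤ ε / b * Real.log (K / π) := by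
    have : b / ε ≤ Real.log (K / π) := by
      rw [Real.le_log_iff_exp_le (by have := pi_pos.trans hK; positivity), le_div_iff₀ pi_pos, mul_comm]
      exact le_max_right _ _
    calc (1:ℝ) = ε / b * (b / ε) := by field_simp
      _ ≤ _ := mul_le_mul_of_nonneg_left this hbe.le
  have hm := base_mono hK hbe h1
  have hrw : ∀ x ∈ Set.Ioc 0 π, x ^ ε * Real.log (K / x) ^ b = (x ^ (ε / b) * Real.log (K / x)) ^ b := by
    intro x hx
    have := hx.1
    rw [Real.mul_rpow (by positivity) (log_pos_aux hK hx).le, ← Real.rpow_mul hx.1.le]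
    congr 2; field_simp
  intro x hx y hy hxy
  simp only
  rw [hrw x hx, hrw y hy]
  apply Real.rpow_le_rpow _ (hm hx hy hxy) hb.le
  exact mul_nonneg (Real.rpow_nonneg hx.1.le _) (log_pos_aux hK hx).le

lemma ratio_mono {κ K : ℝ} (hκ : π < κ) (hK : κ ≤ K) :
    MonotoneOn (fun x => Real.log (K / x) / Real.log (κ / x)) (Set.Ioc 0 π) := by
  have hκ0 : 0 < κ := pi_pos.trans hκ
  have hK0 : 0 < K := hκ0.trans_le hK
  have e : ∀ x ∈ Set.Ioc 0 π, Real.log (K / x) / Real.log (κ / x) = 1 + Real.log (K / κ) / Real.log (κ / x) := by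
    intro x hx
    have := log_pos_aux hκ hx
    have h : Real.log (K / x) = Real.log (κ / x) + Real.log (K / κ) := by
      rw [Real.log_div hK0.ne' hx.1.ne', Real.log_div hκ0.ne' hx.1.ne', Real.log_div hK0.ne' hκ0.ne']; ring
    rw [h]; field_simp
  intro x hx y hy hxy
  simp only
  rw [e x hx, e y hy]
  have := log_pos_aux hκ hy
  have h0 : 0 ≤ Real.log (K / κ) := Real.log_nonneg (by rw [le_div_iff₀ hκ0]; linarith)
  have h1 : Real.log (κ / y) ≤ Real.log (κ / x) := by
    have := hx.1
    have := hy.1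
    apply Real.log_le_log (by positivity)
    exact div_le_div_of_nonneg_left hκ0.le hx.1 hxy
  gcongr

lemma log_anti {κ : ℝ} (hκ : π < κ) {x y : ℝ} (hx : 0 < x) (hxy : x ≤ y) :
    Real.log (κ / y) ≤ Real.log (κ / x) := by
  have hκ0 : 0 < κ := pi_pos.trans hκ
  have hy := hx.trans_le hxy
  apply Real.log_le_log (by positivity)
  exact div_le_div_of_nonneg_left hκ0.le hx hxy

lemma log_monoK {κ K : ℝ} (hκ : π < κ) (hK : κ ≤ K) {x : ℝ} (hx : 0 < x) :
    Real.log (κ / x) ≤ Real.log (K / x) := by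
  have hκ0 : 0 < κ := pi_pos.trans hκ
  apply Real.log_le_log (by positivity)
  gcongr

lemma gg_nonneg {κ ν a x : ℝ} (hκ : π < κ) (hx : x ∈ Set.Ioc 0 π) : 0 ≤ gg κ ν a x :=
  mul_nonneg (Real.rpow_nonneg hx.1.le _) (Real.rpow_nonneg (log_pos_aux hκ hx).le _)

lemma gg_struct (κ ν a : ℝ) (hκ : π < κ) (hν : 0 < ν) : ∃ g1 r : ℝ → ℝ,
    (∀ x ∈ Set.Ioc 0 π, gg κ ν a x = r x * g1 x) ∧
    AntitoneOn g1 (Set.Ioc 0 π) ∧ MonotoneOn r (Set.Ioc 0 π) ∧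
    (∀ x ∈ Set.Ioc 0 π, 0 ≤ r x) ∧ (∀ x ∈ Set.Ioc 0 π, 0 ≤ g1 x) ∧
    (∀ x ∈ Set.Ioc 0 π, g1 x ≤ gg κ ν a x) := by
  rcases le_or_gt a 0 with ha | ha
  · refine ⟨gg κ ν a, fun _ => 1, by simp, ?_, monotoneOn_const, by simp, fun x hx => gg_nonneg hκ hx, by simp⟩
    intro x hx y hy hxy
    have := hx.1
    have := log_pos_aux hκ hx
    have := log_pos_aux hκ hy
    unfold gg
    apply mul_le_mul _ _ (by positivity) (by positivity)
    · exact Real.rpow_le_rpow_of_nonpos hx.1 hxy (by linarith)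
    · exact Real.rpow_le_rpow (by positivity) (log_anti hκ hx.1 hxy) (by linarith)
  · obtain ⟨K, hK, hm⟩ := pow_mono κ hκ hν ha
    have hKπ := hκ.trans_le hK
    refine ⟨gg K ν a, fun x => (Real.log (K / x) / Real.log (κ / x)) ^ a, ?_, ?_, ?_, ?_, ?_, ?_⟩
    · intro x hx
      have h1 := log_pos_aux hκ hx
      have h2 := log_pos_aux hKπ hx
      unfold gg
      simp only
      rw [Real.div_rpow h2.le h1.le, Real.rpow_neg h1.le, Real.rpow_neg h2.le]
      have : 0 < Real.log (K / x) ^ a := by positivity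
      field_simp
    · have e : ∀ x ∈ Set.Ioc 0 π, gg K ν a x = (x ^ ν * Real.log (K / x) ^ a)⁻¹ := by
        intro x hx
        unfold gg
        rw [Real.rpow_neg (log_pos_aux hKπ hx).le, Real.rpow_neg hx.1.le, mul_inv]
      intro x hx y hy hxy
      rw [e x hx, e y hy]
      have := hx.1
      have := log_pos_aux hKπ hx
      exact inv_anti₀ (by positivity) (hm hx hy hxy)
    · intro x hx y hy hxy
      have h1 := log_pos_aux hκ hx
      have h2 := log_pos_aux hKπ hx
      exact Real.rpow_le_rpow (by positivity) (ratio_mono hκ hK hx hy hxy) ha.le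
    · intro x hx
      have h1 := log_pos_aux hκ hx
      have h2 := log_pos_aux hKπ hx
      positivity
    · exact fun x hx => gg_nonneg hKπ hx
    · intro x hx
      have h1 := log_pos_aux hκ hx
      exact mul_le_mul_of_nonneg_left (Real.rpow_le_rpow_of_nonpos h1 (log_monoK hκ hK hx.1) (by linarith))
        (Real.rpow_nonneg hx.1.le _)

lemma gg_bound (κ ν a μ : ℝ) (hκ : π < κ) (hμ : ν < μ) : ∃ C : ℝ, 0 < C ∧
    ∀ x d, 0 < x → x ≤ d → d ≤ π → gg κ ν a x ≤ C * x ^ (-μ) * (d ^ (μ - ν) * Real.log (κ / d) ^ (-a)) := by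
  have sp : ∀ x : ℝ, 0 < x → x ^ (-ν) = x ^ (-μ) * x ^ (μ - ν) := by
    intro x hx
    rw [← Real.rpow_add hx]; congr 1; ring
  rcases le_or_gt 0 a with ha | ha
  · refine ⟨1, one_pos, fun x d hx hxd hd => ?_⟩
    have hd0 := hx.trans_le hxd
    have h1 := log_pos_aux hκ (x := d) ⟨hd0, hd⟩
    unfold gg
    rw [sp x hx, one_mul, mul_assoc]
    have := log_pos_aux hκ (x := x) ⟨hx, hxd.trans hd⟩
    have i1 : x ^ (μ - ν) ≤ d ^ (μ - ν) := Real.rpow_le_rpow hx.le hxd (by linarith)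
    have i2 : Real.log (κ / x) ^ (-a) ≤ Real.log (κ / d) ^ (-a) :=
      Real.rpow_le_rpow_of_nonpos h1 (log_anti hκ hx hxd) (by linarith)
    gcongr
  · obtain ⟨K, hK, hm⟩ := pow_mono κ hκ (sub_pos.2 hμ) (neg_pos.2 ha)
    have hKπ := hκ.trans_le hK
    have hπ : π ∈ Set.Ioc 0 π := ⟨pi_pos, le_rfl⟩
    have p1 := log_pos_aux hκ hπ
    have p2 := log_pos_aux hKπ hπ
    refine ⟨(Real.log (K / π) / Real.log (κ / π)) ^ (-a), by positivity, fun x d hx hxd hd => ?_⟩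
    have hd0 := hx.trans_le hxd
    have hdm : d ∈ Set.Ioc 0 π := ⟨hd0, hd⟩
    have hxm : x ∈ Set.Ioc 0 π := ⟨hx, hxd.trans hd⟩
    have h1 := log_pos_aux hκ hdm
    have h2 := log_pos_aux hKπ hdm
    have h3 := log_pos_aux hκ hxm
    have i1 : Real.log (κ / x) ^ (-a) ≤ Real.log (K / x) ^ (-a) :=
      Real.rpow_le_rpow h3.le (log_monoK hκ hK hx) (by linarith)
    have i2 := hm hxm hdm hxd
    have i3 : Real.log (K / d) ^ (-a) ≤ (Real.log (K / π) / Real.log (κ / π)) ^ (-a) * Real.log (κ / d) ^ (-a) := by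
      rw [← Real.mul_rpow (by positivity) h1.le]
      apply Real.rpow_le_rpow h2.le _ (by linarith)
      exact (div_le_iff₀ h1).1 (ratio_mono hκ hK hdm hπ hd)
    calc gg κ ν a x = x ^ (-μ) * (x ^ (μ - ν) * Real.log (κ / x) ^ (-a)) := by
          unfold gg; rw [sp x hx]; ring
      _ ≤ x ^ (-μ) * (x ^ (μ - ν) * Real.log (K / x) ^ (-a)) := by gcongr
      _ ≤ x ^ (-μ) * (d ^ (μ - ν) * Real.log (K / d) ^ (-a)) := 
          mul_le_mul_of_nonneg_left i2 (by positivity)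
      _ ≤ x ^ (-μ) * (d ^ (μ - ν) * ((Real.log (K / π) / Real.log (κ / π)) ^ (-a) * Real.log (κ / d) ^ (-a))) := by gcongr
      _ = _ := by ring

lemma log_compare (κ a : ℝ) (hκ : π < κ) : ∃ C : ℝ, 0 < C ∧ ∀ k : ℝ, 2 ≤ k →
    Real.log (κ / (1 / k)) ^ (-a) ≤ C * Real.log k ^ (-a) := by
  have hκ1 : 1 < κ := by linarith [pi_gt_three]
  have hlκ := Real.log_pos hκ1
  have hl2 := Real.log_pos (one_lt_two : (1:ℝ) < 2)
  have e : ∀ k : ℝ, 2 ≤ k → Real.log (κ / (1 / k)) = Real.log κ + Real.log k := by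
    intro k hk
    rw [div_div_eq_mul_div, div_one, Real.log_mul (by linarith) (by linarith)]
  rcases le_or_gt 0 a with ha | ha
  · refine ⟨1, one_pos, fun k hk => ?_⟩
    rw [e k hk, one_mul]
    have := Real.log_pos (by linarith : 1 < k)
    exact Real.rpow_le_rpow_of_nonpos this (by linarith) (by linarith)
  · refine ⟨(Real.log κ / Real.log 2 + 1) ^ (-a), by positivity, fun k hk => ?_⟩
    have h1 := Real.log_pos (by linarith : 1 < k)
    have h2 : Real.log 2 ≤ Real.log k := Real.log_le_log (by norm_num) hk
    rw [e k hk, ← Real.mul_rpow (by positivity) h1.le]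
    apply Real.rpow_le_rpow (by positivity) _ (by linarith)
    have : Real.log κ = Real.log κ / Real.log 2 * Real.log 2 := by field_simp
    have h3 : Real.log κ / Real.log 2 * Real.log 2 ≤ Real.log κ / Real.log 2 * Real.log k := by gcongr
    linarith

lemma bv_decomp (φ : ℝ → ℝ) (h : BoundedVariationOn φ (Set.Ioo 0 π)) : ∃ (p q : ℝ → ℝ) (M : ℝ),
    Monotone p ∧ Monotone q ∧ (∀ x ∈ Set.Ioc 0 π, 0 ≤ p x ∧ p x ≤ M) ∧
    (∀ x ∈ Set.Ioc 0 π, 0 ≤ q x ∧ q x ≤ M) ∧ ∀ x ∈ Set.Ioo 0 π, φ x = p x - q x := by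
  obtain ⟨p, q, hp, hq, hpq, hvar⟩ := h.locallyBoundedVariationOn.exists_monotoneOn_sub_monotoneOn'
  set s := Set.Ioo 0 π with hs
  set W := (eVariationOn φ s).toReal with hW
  have hvb : ∀ x ∈ s, ∀ y ∈ s, x ≤ y → variationOnFromTo φ s x y ≤ W := by
    intro x hx y hy hxy
    rw [variationOnFromTo.eq_of_le _ _ hxy]
    exact ENNReal.toReal_mono h (eVariationOn.mono _ Set.inter_subset_left)
  have key : ∀ x ∈ s, ∀ y ∈ s, x ≤ y → p y - p x ≤ W ∧ q y - q x ≤ W := by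
    intro x hx y hy hxy
    have h1 := hvb x hx y hy hxy
    have h2 := hvar x hx y hy
    have h3 := hp hx hy hxy
    have h4 := hq hx hy hxy
    constructor <;> linarith
  have hW0 : 0 ≤ W := ENNReal.toReal_nonneg
  have hc : (1:ℝ) ∈ s := ⟨one_pos, by linarith [pi_gt_three]⟩
  have ext : ∀ f : ℝ → ℝ, MonotoneOn f s → (∀ x ∈ s, ∀ y ∈ s, x ≤ y → f y - f x ≤ W) →
      ∃ g : ℝ → ℝ, Monotone g ∧ Set.EqOn f g s := by
    intro f hf hb
    apply hf.exists_monotone_extension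
    · refine ⟨f 1 - W, ?_⟩
      rintro _ ⟨x, hx, rfl⟩
      rcases le_total x 1 with h | h
      · linarith [hb x hx 1 hc h]
      · linarith [hf hc hx h]
    · refine ⟨f 1 + W, ?_⟩
      rintro _ ⟨x, hx, rfl⟩
      rcases le_total x 1 with h | h
      · linarith [hf hx hc h]
      · linarith [hb 1 hc x hx h]
  obtain ⟨P, hP, hPe⟩ := ext p hp (fun x hx y hy hxy => (key x hx y hy hxy).1)
  obtain ⟨Q, hQ, hQe⟩ := ext q hq (fun x hx y hy hxy => (key x hx y hy hxy).2)
  refine ⟨fun x => P x + (|P 0| + |Q 0|), fun x => Q x + (|P 0| + |Q 0|),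
    max (P π) (Q π) + (|P 0| + |Q 0|), hP.add_const _, hQ.add_const _, ?_, ?_, ?_⟩
  · intro x hx
    have h1 := hP hx.1.le
    have h2 := hP hx.2
    have := le_max_left (P π) (Q π)
    have := neg_abs_le (P 0)
    have := abs_nonneg (Q 0)
    constructor <;> linarith
  · intro x hx
    have h1 := hQ hx.1.le
    have h2 := hQ hx.2
    have := le_max_right (P π) (Q π)
    have := neg_abs_le (Q 0)
    have := abs_nonneg (P 0)
    constructor <;> linarith
  · intro x hx
    simp only
    rw [← hPe hx, ← hQe hx, hpq, Pi.sub_apply]; ring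

lemma ek_integrable {f : ℝ → ℝ} {a b : ℝ} (k : ℝ) (h : IntervalIntegrable f volume a b) :
    IntervalIntegrable (fun x => ek k x * (f x : ℂ)) volume a b := by
  have : IntervalIntegrable (fun x => (f x : ℂ)) volume a b := ⟨h.1.ofReal, h.2.ofReal⟩
  exact this.continuousOn_mul (ek_cont k).continuousOn

lemma half_mono (κ ν a : ℝ) (hκ : π < κ) (hν0 : 0 < ν) (hν1 : ν < 1) (m : ℝ → ℝ) (M : ℝ)
    (hm : Monotone m) (hmb : ∀ x ∈ Set.Ioc 0 π, 0 ≤ m x ∧ m x ≤ M) :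
    IntervalIntegrable (fun x => m x * gg κ ν a x) volume 0 π ∧ ∃ C : ℝ, 0 ≤ C ∧ ∀ k : ℝ, 2 ≤ |k| →
      ‖∫ x in (0:ℝ)..π, ek k x * ((m x * gg κ ν a x : ℝ) : ℂ)‖ ≤
        C * (|k| ^ (ν - 1) * Real.log |k| ^ (-a)) := by
  set μ := (1 + ν) / 2 with hμ
  have hμ1 : μ < 1 := by rw [hμ]; linarith
  have hνμ : ν < μ := by rw [hμ]; linarith
  have hπm : π ∈ Set.Ioc 0 π := ⟨pi_pos, le_rfl⟩
  have hM0 : 0 ≤ M := (hmb π hπm).1.trans (hmb π hπm).2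
  obtain ⟨C1, hC1, hb⟩ := gg_bound κ ν a μ hκ hνμ
  obtain ⟨C2, hC2, hlog⟩ := log_compare κ a hκ
  obtain ⟨g1, r, hgr, hg1, hr, hr0, hg10, hg1le⟩ := gg_struct κ ν a hκ hν0
  have hpi : ∀ b, IntervalIntegrable (fun x : ℝ => x ^ (-μ)) volume 0 b :=
    fun b => intervalIntegral.intervalIntegrable_rpow' (by linarith)
  -- pointwise bound
  have hpt : ∀ x d, 0 < x → x ≤ d → d ≤ π →
      ‖m x * gg κ ν a x‖ ≤ M * (C1 * (d ^ (μ - ν) * Real.log (κ / d) ^ (-a))) * x ^ (-μ) := by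
    intro x d hx hxd hd
    have hxm : x ∈ Set.Ioc 0 π := ⟨hx, hxd.trans hd⟩
    rw [Real.norm_eq_abs, abs_of_nonneg (mul_nonneg (hmb x hxm).1 (gg_nonneg hκ hxm))]
    refine (mul_le_mul (hmb x hxm).2 (hb x d hx hxd hd) (gg_nonneg hκ hxm) hM0).trans (le_of_eq (by ring))
  have hmeas : Measurable (fun x => m x * gg κ ν a x) := by
    apply hm.measurable.mul
    unfold gg
    fun_prop
  have hint : IntervalIntegrable (fun x => m x * gg κ ν a x) volume 0 π := by
    have hI := (hpi π).const_mul (M * (C1 * (π ^ (μ - ν) * Real.log (κ / π) ^ (-a))))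
    refine hI.mono_fun hmeas.aestronglyMeasurable ?_
    rw [Set.uIoc_of_le pi_pos.le]
    filter_upwards [ae_restrict_mem measurableSet_Ioc] with x hx
    exact (hpt x π hx.1 hx.2 le_rfl).trans (le_abs_self _)
  refine ⟨hint, M * C1 * C2 / (1 - μ) + π * (3 * (M * r π)) * C2, ?_, ?_⟩
  · have := hr0 π hπm
    have : 0 < 1 - μ := by linarith
    positivity
  intro k hk
  have hk0 : k ≠ 0 := by rintro rfl; norm_num at hk
  have hkp : 0 < |k| := by positivity
  set d := 1 / |k| with hd
  have hdp : 0 < d := by positivity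
  have hdπ : d ≤ π := by
    have : d ≤ 1 / 2 := one_div_le_one_div_of_le (by norm_num) hk
    linarith [pi_gt_three]
  have hdm : d ∈ Set.Ioc 0 π := ⟨hdp, hdπ⟩
  have hint1 : IntervalIntegrable (fun x => m x * gg κ ν a x) volume 0 d :=
    hint.mono_set (by rw [Set.uIcc_of_le hdp.le, Set.uIcc_of_le pi_pos.le]; exact Set.Icc_subset_Icc le_rfl hdπ)
  have hint2 : IntervalIntegrable (fun x => m x * gg κ ν a x) volume d π :=
    hint.mono_set (by rw [Set.uIcc_of_le hdπ, Set.uIcc_of_le pi_pos.le]; exact Set.Icc_subset_Icc hdp.le le_rfl)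
  rw [← intervalIntegral.integral_add_adjacent_intervals (ek_integrable k hint1) (ek_integrable k hint2)]
  have hlk := hlog |k| hk
  rw [← hd] at hlk
  have hlk0 : 0 ≤ Real.log |k| ^ (-a) := Real.rpow_nonneg (Real.log_nonneg (by linarith)) _
  have b1 : ‖∫ x in (0:ℝ)..d, ek k x * ((m x * gg κ ν a x : ℝ) : ℂ)‖ ≤
      M * C1 * C2 / (1 - μ) * (|k| ^ (ν - 1) * Real.log |k| ^ (-a)) := by
    have h1 := intervalIntegral.norm_integral_le_of_norm_le (μ := volume) (a := 0) (b := d)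
      (f := fun x => ek k x * ((m x * gg κ ν a x : ℝ) : ℂ)) hdp.le
      (g := fun x => M * (C1 * (d ^ (μ - ν) * Real.log (κ / d) ^ (-a))) * x ^ (-μ))
      (Filter.Eventually.of_forall fun x hx => by
        rw [norm_mul, ek_norm, one_mul, Complex.norm_real]
        exact hpt x d hx.1 hx.2 hdπ) ((hpi d).const_mul _)
    refine h1.trans ?_
    rw [intervalIntegral.integral_const_mul, integral_rpow (Or.inl (by linarith))]
    have e1 : (0:ℝ) ^ (-μ + 1) = 0 := Real.zero_rpow (by linarith)
    have e2 : d ^ (μ - ν) * d ^ (-μ + 1) = |k| ^ (ν - 1) := by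
      rw [← Real.rpow_add hdp, hd, one_div, Real.inv_rpow hkp.le, ← Real.rpow_neg hkp.le]
      congr 1; ring
    rw [e1, sub_zero]
    have h1μ : 0 < 1 - μ := by linarith
    calc _ = M * C1 / (1 - μ) * (|k| ^ (ν - 1)) * (Real.log (κ / d) ^ (-a)) := by
          rw [← e2, show -μ + 1 = 1 - μ by ring]; ring
      _ ≤ M * C1 / (1 - μ) * (|k| ^ (ν - 1)) * (C2 * Real.log |k| ^ (-a)) := by gcongr
      _ = _ := by ring
  have b2 : ‖∫ x in d..π, ek k x * ((m x * gg κ ν a x : ℝ) : ℂ)‖ ≤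
      π * (3 * (M * r π)) * C2 * (|k| ^ (ν - 1) * Real.log |k| ^ (-a)) := by
    have e : ∫ x in d..π, ek k x * ((m x * gg κ ν a x : ℝ) : ℂ) =
        ∫ x in d..π, ek k x * (((m x * r x) * g1 x : ℝ) : ℂ) := by
      apply intervalIntegral.integral_congr
      intro x hx
      rw [Set.uIcc_of_le hdπ] at hx
      simp only
      rw [hgr x ⟨hdp.trans_le hx.1, hx.2⟩, mul_assoc]
    rw [e]
    refine (mul_bound (fun x => m x * r x) g1 (M * r π) k d hk0 hdp hdπ ?_ hg1 ?_ ?_ hg10).trans ?_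
    · intro x hx y hy hxy
      exact mul_le_mul (hm hxy) (hr hx hy hxy) (hr0 x hx) (hmb y hy).1
    · exact fun x hx => mul_nonneg (hmb x hx).1 (hr0 x hx)
    · exact fun x hx => mul_le_mul (hmb x hx).2 (hr hx hπm hx.2) (hr0 x hx) hM0
    · have hrπ := hr0 π hπm
      have e2 : |k| ^ (ν - 1) = d ^ (-ν) / |k| := by
        rw [hd, one_div, Real.inv_rpow hkp.le, ← Real.rpow_neg hkp.le, neg_neg, Real.rpow_sub_one hkp.ne']
      have h3 : g1 d ≤ d ^ (-ν) * (C2 * Real.log |k| ^ (-a)) :=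
        (hg1le d hdm).trans (mul_le_mul_of_nonneg_left hlk (by positivity))
      calc _ ≤ π / |k| * (3 * (M * r π) * (d ^ (-ν) * (C2 * Real.log |k| ^ (-a)))) := by gcongr
        _ = _ := by rw [e2]; ring
  refine (norm_add_le _ _).trans ((add_le_add b1 b2).trans (le_of_eq (by ring)))

lemma half_bv (κ ν a : ℝ) (hκ : π < κ) (hν0 : 0 < ν) (hν1 : ν < 1) (φ U : ℝ → ℝ)
    (h : BoundedVariationOn φ (Set.Ioo 0 π)) (hU : ∀ x ∈ Set.Ioo 0 π, U x = φ x * gg κ ν a x) :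
    IntervalIntegrable U volume 0 π ∧ ∃ C : ℝ, 0 ≤ C ∧ ∀ k : ℝ, 2 ≤ |k| →
      ‖∫ x in (0:ℝ)..π, ek k x * (U x : ℂ)‖ ≤ C * (|k| ^ (ν - 1) * Real.log |k| ^ (-a)) := by
  obtain ⟨p, q, M, hp, hq, hpb, hqb, hpq⟩ := bv_decomp φ h
  obtain ⟨ip, Cp, hCp, bp⟩ := half_mono κ ν a hκ hν0 hν1 p M hp hpb
  obtain ⟨iq, Cq, hCq, bq⟩ := half_mono κ ν a hκ hν0 hν1 q M hq hqb
  have hae : ∀ᵐ x ∂volume, x ∈ Set.uIoc 0 π → U x = p x * gg κ ν a x - q x * gg κ ν a x := by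
    have : ∀ᵐ x ∂(volume : Measure ℝ), x ≠ π := by simp [ae_iff]
    filter_upwards [this] with x hx hx2
    rw [Set.uIoc_of_le pi_pos.le] at hx2
    have hx3 : x ∈ Set.Ioo 0 π := ⟨hx2.1, lt_of_le_of_ne hx2.2 hx⟩
    rw [hU x hx3, hpq x hx3]; ring
  refine ⟨?_, Cp + Cq, by positivity, fun k hk => ?_⟩
  · refine (ip.sub iq).congr_ae ?_
    rw [Filter.EventuallyEq, ae_restrict_iff' measurableSet_uIoc]
    filter_upwards [hae] with x hx hx2
    exact (hx hx2).symm
  · have e : ∫ x in (0:ℝ)..π, ek k x * (U x : ℂ) = ∫ x in (0:ℝ)..π,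
        (ek k x * ((p x * gg κ ν a x : ℝ) : ℂ) - ek k x * ((q x * gg κ ν a x : ℝ) : ℂ)) := by
      apply intervalIntegral.integral_congr_ae
      filter_upwards [hae] with x hx hx2
      rw [hx hx2, Complex.ofReal_sub, mul_sub]
    rw [e, intervalIntegral.integral_sub (ek_integrable k ip) (ek_integrable k iq), add_mul]
    exact (norm_sub_le _ _).trans (add_le_add (bp k hk) (bq k hk))

/-- Fourier decay for the (possibly unbounded) potential
`V(x) = φ(x)/(|x|^ν (log|κ/x|)^a)` with `φ` of bounded variation. -/
theorem unbounded_potential_fourier_decay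
    (φ V : ℝ → ℝ) (ν κ a : ℝ)
    (hφ : BoundedVariationOn φ (Set.Ico (-π) π))
    (hν0 : 0 < ν) (hν1 : ν < 1) (hκ : π < κ)
    (hper : Function.Periodic V (2 * π))
    (hV : ∀ x ∈ Set.Ico (-π) π, V x = φ x / (|x| ^ ν * Real.log |κ / x| ^ a)) :
    IntegrableOn V (Set.Ico (-π) π) ∧
    ∃ C : ℝ, 0 < C ∧
      ‖fc (fun x => (V x : ℂ)) 0‖ ≤ C ∧
      ∀ k : ℤ, 2 ≤ |k| →
        ‖fc (fun x => (V x : ℂ)) k‖ ≤ C * |(k : ℝ)| ^ (ν - 1) * Real.log |(k : ℝ)| ^ (-a) := by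
  have hneg : BoundedVariationOn (fun x => φ (-x)) (Set.Ioo 0 π) := by
    refine ne_top_of_le_ne_top hφ (eVariationOn.comp_le_of_antitoneOn φ (fun x => -x) ?_ ?_)
    · exact fun x _ y _ h => neg_le_neg h
    · intro x hx
      exact ⟨by linarith [hx.2], by linarith [hx.1, pi_pos]⟩
  have hpos : BoundedVariationOn φ (Set.Ioo 0 π) := hφ.mono fun x hx => ⟨by linarith [hx.1, pi_pos], hx.2⟩
  have hgg : ∀ x ∈ Set.Ioo 0 π, (x ^ ν * Real.log |κ / x| ^ a)⁻¹ = gg κ ν a x := by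
    intro x hx
    have h1 := log_pos_aux hκ ⟨hx.1, hx.2.le⟩
    have hκ0 := pi_pos.trans hκ
    have hx0 := hx.1
    rw [abs_of_pos (by positivity), gg, Real.rpow_neg hx.1.le, Real.rpow_neg h1.le, mul_inv]
  obtain ⟨i1, C1, hC1, b1⟩ := half_bv κ ν a hκ hν0 hν1 φ V hpos (by
    intro x hx
    rw [hV x ⟨by linarith [hx.1, pi_pos], hx.2⟩, abs_of_pos hx.1, div_eq_mul_inv, hgg x hx])
  obtain ⟨i2, C2, hC2, b2⟩ := half_bv κ ν a hκ hν0 hν1 (fun x => φ (-x)) (fun x => V (-x)) hneg (by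
    intro x hx
    rw [hV (-x) ⟨by linarith [hx.2], by linarith [hx.1, pi_pos]⟩, abs_neg, abs_of_pos hx.1, div_neg, abs_neg,
      div_eq_mul_inv, hgg x hx])
  have i2' : IntervalIntegrable V volume (-π) 0 := by
    have := (IntervalIntegrable.iff_comp_neg (f := fun x => V (-x)) (a := 0) (b := π)).1 i2
    simpa using this.symm
  have i3 := i2'.trans i1
  refine ⟨?_, ?_⟩
  · rw [integrableOn_Ico_iff_integrableOn_Ioo, ← integrableOn_Ioc_iff_integrableOn_Ioo]
    exact (intervalIntegrable_iff_integrableOn_Ioc_of_le (by linarith [pi_pos])).1 i3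
  refine ⟨‖fc (fun x => (V x : ℂ)) 0‖ + (C1 + C2) + 1, by positivity, by linarith, fun k hk => ?_⟩
  have hk' : 2 ≤ |(k:ℝ)| := by exact_mod_cast hk
  have hfc : fc (fun x => (V x : ℂ)) k = (1 / (2 * π)) *
      ((∫ x in (0:ℝ)..π, ek (-k) x * (V (-x) : ℂ)) + ∫ x in (0:ℝ)..π, ek k x * (V x : ℂ)) := by
    unfold fc
    congr 1
    have hp : Function.Periodic (fun x : ℝ => ek k x * (V x : ℂ)) (2 * π) := by
      intro x
      simp only
      rw [hper x]
      congr 1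
      unfold ek
      rw [Complex.exp_eq_exp_iff_exists_int]
      refine ⟨-k, ?_⟩
      push_cast; ring
    have h1 := hp.intervalIntegral_add_eq 0 (-π)
    rw [zero_add, show -π + 2 * π = π by ring] at h1
    have h2 : ∫ x in (0:ℝ)..π, ek (-k) x * (V (-x) : ℂ) = ∫ x in (-π)..0, ek k x * (V x : ℂ) := by
      have := intervalIntegral.integral_comp_neg (a := 0) (b := π) (fun x => ek k x * (V x : ℂ))
      rw [neg_zero] at this
      rw [← this]
      congr 1; ext x
      congr 1
      unfold ek; congr 1; push_cast; ring
    rw [h2, intervalIntegral.integral_add_adjacent_intervals (ek_integrable k i2') (ek_integrable k i1), ← h1]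
    congr 1
  have hlk0 : 0 ≤ Real.log |(k:ℝ)| ^ (-a) := Real.rpow_nonneg (Real.log_nonneg (by linarith)) _
  have hX : 0 ≤ |(k:ℝ)| ^ (ν - 1) * Real.log |(k:ℝ)| ^ (-a) := mul_nonneg (by positivity) hlk0
  have hn : ‖(1 / (2 * π) : ℂ)‖ ≤ 1 := by
    rw [norm_div, norm_mul, Complex.norm_real, Real.norm_eq_abs, abs_of_pos pi_pos]
    simp only [norm_one, Complex.norm_ofNat]
    rw [div_le_one (by positivity)]; linarith [pi_gt_three]
  have h1 := b1 k hk'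
  have h2 := b2 (-k) (by rwa [abs_neg])
  rw [abs_neg] at h2
  push_cast at h2
  rw [hfc, norm_mul, mul_assoc]
  calc _ ≤ 1 * ((C2 * (|(k:ℝ)| ^ (ν - 1) * Real.log |(k:ℝ)| ^ (-a))) + C1 * (|(k:ℝ)| ^ (ν - 1) * Real.log |(k:ℝ)| ^ (-a))) :=
        mul_le_mul hn ((norm_add_le _ _).trans (add_le_add h2 h1)) (norm_nonneg _) zero_le_one
    _ = (C1 + C2) * (|(k:ℝ)| ^ (ν - 1) * Real.log |(k:ℝ)| ^ (-a)) := by ring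
    _ ≤ _ := mul_le_mul_of_nonneg_right (by linarith [norm_nonneg (fc (fun x => (V x : ℂ)) 0)]) hX
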